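/- If a base change operator ∘ satisfies postulates (G5) and (G6), then for every belief base K the canonical relation ⪯ᵒ_K is total, and hence reflexive. -/

import Mathlib

namespace BeliefRev

variable {L Ω : Type*}

/-- The models of a belief base (a finite set of sentences). -/
def Mod (sat : Ω → L → Prop) (K : Finset L) : Set Ω :=
  {ω | ∀ φ ∈ K, sat ω φ}

/-- `min(S, r)`: the elements of `S` that are `r`-below every element of `S`. -/
def minSet (S : Set Ω) (r : Ω → Ω → Prop) : Set Ω :=
  {ω ∈ S | ∀ ω' ∈ S, r ω ω'}

/-- A binary relation is total. -/
def TotalRel (r : Ω → Ω → Prop) : Prop :=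
  ∀ ω₁ ω₂, r ω₁ ω₂ ∨ r ω₂ ω₁

/-- The strict part of a relation: `ω₁ ≺ ω₂` iff `ω₁ ⪯ ω₂` and not `ω₂ ⪯ ω₁`. -/
def StrictRel (r : Ω → Ω → Prop) (ω₁ ω₂ : Ω) : Prop :=
  r ω₁ ω₂ ∧ ¬ r ω₂ ω₁

/-- Postulate (G1). -/
def G1 (sat : Ω → L → Prop) (op : Finset L → Finset L → Finset L) : Prop :=
  ∀ K Γ, Mod sat (op K Γ) ⊆ Mod sat Γ

/-- Postulate (G2). -/
def G2 [DecidableEq L] (sat : Ω → L → Prop) (op : Finset L → Finset L → Finset L) : Prop :=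
  ∀ K Γ, (Mod sat (K ∪ Γ)).Nonempty → Mod sat (op K Γ) = Mod sat (K ∪ Γ)

/-- Postulate (G3). -/
def G3 (sat : Ω → L → Prop) (op : Finset L → Finset L → Finset L) : Prop :=
  ∀ K Γ, (Mod sat Γ).Nonempty → (Mod sat (op K Γ)).Nonempty

/-- Postulate (G4). -/
def G4 (sat : Ω → L → Prop) (op : Finset L → Finset L → Finset L) : Prop :=
  ∀ K₁ K₂ Γ₁ Γ₂, Mod sat K₁ = Mod sat K₂ → Mod sat Γ₁ = Mod sat Γ₂ →
    Mod sat (op K₁ Γ₁) = Mod sat (op K₂ Γ₂)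

/-- Postulate (G5). -/
def G5 [DecidableEq L] (sat : Ω → L → Prop) (op : Finset L → Finset L → Finset L) : Prop :=
  ∀ K Γ₁ Γ₂, Mod sat (op K Γ₁) ∩ Mod sat Γ₂ ⊆ Mod sat (op K (Γ₁ ∪ Γ₂))

/-- Postulate (G6). -/
def G6 [DecidableEq L] (sat : Ω → L → Prop) (op : Finset L → Finset L → Finset L) : Prop :=
  ∀ K Γ₁ Γ₂, (Mod sat (op K Γ₁) ∩ Mod sat Γ₂).Nonempty →
    Mod sat (op K (Γ₁ ∪ Γ₂)) ⊆ Mod sat (op K Γ₁) ∩ Mod sat Γ₂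

/-- The conjunction of postulates (G1)–(G6). -/
def AGM [DecidableEq L] (sat : Ω → L → Prop) (op : Finset L → Finset L → Finset L) : Prop :=
  G1 sat op ∧ G2 sat op ∧ G3 sat op ∧ G4 sat op ∧ G5 sat op ∧ G6 sat op

/-- The canonical relation `⪯ᵒ_K` obtained from a base change operator. -/
def canonicalRel (sat : Ω → L → Prop) (op : Finset L → Finset L → Finset L)
    (K : Finset L) (ω₁ ω₂ : Ω) : Prop :=
  ∀ Γ : Finset L, ω₁ ∈ Mod sat Γ → ω₂ ∈ Mod sat Γ →
    (ω₁ ∈ Mod sat (op K Γ) ∨ ω₂ ∉ Mod sat (op K Γ))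

/-- A relation is min-retractive. -/
def MinRetractive (sat : Ω → L → Prop) (r : Ω → Ω → Prop) : Prop :=
  ∀ (Γ : Finset L) (ω ω' : Ω), ω ∈ Mod sat Γ → ω' ∈ Mod sat Γ →
    r ω' ω → ω ∈ minSet (Mod sat Γ) r → ω' ∈ minSet (Mod sat Γ) r

/-- A relation is min-complete. -/
def MinComplete (sat : Ω → L → Prop) (r : Ω → Ω → Prop) : Prop :=
  ∀ Γ : Finset L, (Mod sat Γ).Nonempty → (minSet (Mod sat Γ) r).Nonempty

/-- A relation is min-friendly: min-retractive and min-complete. -/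
def MinFriendly (sat : Ω → L → Prop) (r : Ω → Ω → Prop) : Prop :=
  MinRetractive sat r ∧ MinComplete sat r

/-- A relation is min-expressible. -/
def MinExpressible (sat : Ω → L → Prop) (r : Ω → Ω → Prop) : Prop :=
  ∀ Γ : Finset L, ∃ B : Finset L, Mod sat B = minSet (Mod sat Γ) r

/-- An assignment maps each belief base to a *total* relation on interpretations. -/
def IsAssignment (assign : Finset L → Ω → Ω → Prop) : Prop :=
  ∀ K : Finset L, TotalRel (assign K)

/-- Faithfulness of an assignment: conditions (F1), (F2) and (F3). -/
def Faithful (sat : Ω → L → Prop) (assign : Finset L → Ω → Ω → Prop) : Prop :=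
  (∀ (K : Finset L) (ω ω' : Ω), ω ∈ Mod sat K → ω' ∈ Mod sat K →
      ¬ StrictRel (assign K) ω ω') ∧
  (∀ (K : Finset L) (ω ω' : Ω), ω ∈ Mod sat K → ω' ∉ Mod sat K →
      StrictRel (assign K) ω ω') ∧
  (∀ K K' : Finset L, Mod sat K = Mod sat K' → assign K = assign K')

/-- Compatibility of a base change operator with an assignment. -/
def Compatible (sat : Ω → L → Prop) (op : Finset L → Finset L → Finset L)
    (assign : Finset L → Ω → Ω → Prop) : Prop :=
  ∀ K Γ : Finset L, Mod sat (op K Γ) = minSet (Mod sat Γ) (assign K)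

/-- Total preorder representability: there is a faithful assignment compatible with `op`
whose relations are all min-complete and transitive (hence total preorders). -/
def TotalPreorderRepresentable (sat : Ω → L → Prop)
    (op : Finset L → Finset L → Finset L) : Prop :=
  ∃ assign : Finset L → Ω → Ω → Prop,
    IsAssignment assign ∧ Faithful sat assign ∧
    (∀ K : Finset L, MinComplete sat (assign K)) ∧
    (∀ K : Finset L, Transitive (assign K)) ∧
    Compatible sat op assign

/-- A pair of interpretations is detached from `op` in `K`. -/
def Detached (sat : Ω → L → Prop) (op : Finset L → Finset L → Finset L)
    (K : Finset L) (ω ω' : Ω) : Prop :=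
  ∀ Γ : Finset L, ω ∉ Mod sat (op K Γ) ∧ ω' ∉ Mod sat (op K Γ)

/-- Three belief bases form a critical loop for the logic. -/
def CriticalLoop [DecidableEq L] (sat : Ω → L → Prop) (Γ₀ Γ₁ Γ₂ : Finset L) : Prop :=
  ∃ K Γ'₀ Γ'₁ Γ'₂ : Finset L,
    (Mod sat (K ∪ Γ₀) = ∅ ∧ Mod sat (K ∪ Γ₁) = ∅ ∧ Mod sat (K ∪ Γ₂) = ∅) ∧
    ((Mod sat Γ'₀).Nonempty ∧ Mod sat Γ'₀ ⊆ (Mod sat Γ₀ ∩ Mod sat Γ₁) \ Mod sat Γ₂) ∧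
    ((Mod sat Γ'₁).Nonempty ∧ Mod sat Γ'₁ ⊆ (Mod sat Γ₁ ∩ Mod sat Γ₂) \ Mod sat Γ₀) ∧
    ((Mod sat Γ'₂).Nonempty ∧ Mod sat Γ'₂ ⊆ (Mod sat Γ₂ ∩ Mod sat Γ₀) \ Mod sat Γ₁) ∧
    (∀ Γ : Finset L, (Mod sat (Γ'₀ ∪ Γ)).Nonempty → (Mod sat (Γ'₁ ∪ Γ)).Nonempty →
      (Mod sat (Γ'₂ ∪ Γ)).Nonempty →
      ∃ Γ' : Finset L, (Mod sat Γ').Nonempty ∧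
        Mod sat Γ' ⊆ Mod sat Γ \ (Mod sat Γ₀ ∪ Mod sat Γ₁ ∪ Mod sat Γ₂))

/-- The logic admits (exhibits) a critical loop. -/
def AdmitsCriticalLoop [DecidableEq L] (sat : Ω → L → Prop) : Prop :=
  ∃ Γ₀ Γ₁ Γ₂ : Finset L, CriticalLoop sat Γ₀ Γ₁ Γ₂

/-- A logic is disjunctive: any two bases have a base acting as their disjunction. -/
def Disjunctive (sat : Ω → L → Prop) : Prop :=
  ∀ Γ₁ Γ₂ : Finset L, ∃ Δ : Finset L, Mod sat Δ = Mod sat Γ₁ ∪ Mod sat Γ₂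

section

variable [DecidableEq L] {sat : Ω → L → Prop} {op : Finset L → Finset L → Finset L}
  {K Γ₁ Γ₂ : Finset L}

theorem mod_op_union (h5 : G5 sat op) (h6 : G6 sat op)
    (hne : (Mod sat (op K Γ₁) ∩ Mod sat Γ₂).Nonempty) :
    Mod sat (op K (Γ₁ ∪ Γ₂)) = Mod sat (op K Γ₁) ∩ Mod sat Γ₂ :=
  (h6 K Γ₁ Γ₂ hne).antisymm (h5 K Γ₁ Γ₂)

/-- The weak axiom of revealed preference for the choice `Γ ↦ Mod (K ∘ Γ)`: two bases cannot
rank a pair of common models in opposite ways. -/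
theorem mod_op_inter_mod_comm (h5 : G5 sat op) (h6 : G6 sat op)
    (hne₁ : (Mod sat (op K Γ₁) ∩ Mod sat Γ₂).Nonempty)
    (hne₂ : (Mod sat (op K Γ₂) ∩ Mod sat Γ₁).Nonempty) :
    Mod sat (op K Γ₁) ∩ Mod sat Γ₂ = Mod sat (op K Γ₂) ∩ Mod sat Γ₁ := by
  rw [← mod_op_union h5 h6 hne₁, ← mod_op_union h5 h6 hne₂, Finset.union_comm]

end

theorem not_canonicalRel_iff {sat : Ω → L → Prop} {op : Finset L → Finset L → Finset L}
    {K : Finset L} {ω₁ ω₂ : Ω} :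
    ¬ canonicalRel sat op K ω₁ ω₂ ↔
      ∃ Γ, ω₁ ∈ Mod sat Γ ∧ ω₂ ∈ Mod sat Γ ∧
        ω₁ ∉ Mod sat (op K Γ) ∧ ω₂ ∈ Mod sat (op K Γ) := by
  simp only [canonicalRel, not_forall, not_or, not_not, exists_prop]

theorem TotalRel.refl {r : Ω → Ω → Prop} (hr : TotalRel r) (ω : Ω) : r ω ω :=
  or_self_iff.mp (hr ω ω)

/-- If `∘` satisfies (G5) and (G6), then for every belief base `K`
the canonical relation `⪯ᵒ_K` is total, and hence reflexive. -/
theorem canonicalRel_total {L Ω : Type*} [DecidableEq L] (sat : Ω → L → Prop)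
    (op : Finset L → Finset L → Finset L)
    (h5 : G5 sat op) (h6 : G6 sat op) (K : Finset L) :
    TotalRel (canonicalRel sat op K) ∧ Reflexive (canonicalRel sat op K) := by
  have total : TotalRel (canonicalRel sat op K) := by
    intro ω₁ ω₂
    by_contra hincomparable
    obtain ⟨h₁₂, h₂₁⟩ := not_or.mp hincomparable
    obtain ⟨Γ₁, hω₁Γ₁, -, hω₁_rejected, hω₂_chosen⟩ := not_canonicalRel_iff.mp h₁₂
    obtain ⟨Γ₂, hω₂Γ₂, -, -, hω₁_chosen⟩ := not_canonicalRel_iff.mp h₂₁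
    have hcomm : Mod sat (op K Γ₁) ∩ Mod sat Γ₂ = Mod sat (op K Γ₂) ∩ Mod sat Γ₁ :=
      mod_op_inter_mod_comm h5 h6 ⟨ω₂, hω₂_chosen, hω₂Γ₂⟩ ⟨ω₁, hω₁_chosen, hω₁Γ₁⟩
    exact hω₁_rejected (hcomm.superset ⟨hω₁_chosen, hω₁Γ₁⟩).1
  exact ⟨total, total.refl⟩

end BeliefRev
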